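/- Let Ω⁺ = 𝕋² × (0,1) and u ∈ H³(Ω⁺; ℝ³). Then there is a constant C > 0 (independent of u) such that ‖u‖_{H³(Ω⁺)} ≤ C(∑_{|α|≤3, α tangential} ‖∂^α u‖_{L²(Ω⁺)} + ‖div u‖_{H²(Ω⁺)} + ‖curl u‖_{H²(Ω⁺)}), where tangential multi-indices α involve only ∂₁ and ∂₂ derivatives. -/

import Mathlib

open MeasureTheory Set

/-- A fundamental cell for `Ω⁺ = 𝕋² × (0,1)` (functions are `1`-periodic in `x₁, x₂`). -/
def cell : Set (Fin 3 → ℝ) :=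
  {x | x 0 ∈ Ioo (0 : ℝ) 1 ∧ x 1 ∈ Ioo (0 : ℝ) 1 ∧ x 2 ∈ Ioo (0 : ℝ) 1}

/-- The squared `H^m` norm on `Ω⁺ = 𝕋² × (0,1)`. -/
noncomputable def HmSq (m : ℕ) {F : Type*} [NormedAddCommGroup F] [NormedSpace ℝ F]
    (u : (Fin 3 → ℝ) → F) : ℝ :=
  ∑ j ∈ Finset.range (m + 1), ∫ x in cell, ‖iteratedFDeriv ℝ j u x‖ ^ 2

/-- Tangential derivative `∂ᵢ` (`i = 0,1`) of a vector field. -/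
noncomputable def Dtan (i : Fin 3) (u : (Fin 3 → ℝ) → EuclideanSpace ℝ (Fin 3)) :
    (Fin 3 → ℝ) → EuclideanSpace ℝ (Fin 3) :=
  fun x => fderiv ℝ u x (Pi.single i 1)

/-- The `L²` norms of all tangential derivatives `∂₁^a ∂₂^b u`, `a + b ≤ 3`. -/
noncomputable def tangSum (u : (Fin 3 → ℝ) → EuclideanSpace ℝ (Fin 3)) : ℝ :=
  ∑ p ∈ (Finset.range 4 ×ˢ Finset.range 4).filter (fun p => p.1 + p.2 ≤ 3),
    Real.sqrt (∫ x in cell, ‖(Dtan 0)^[p.1] ((Dtan 1)^[p.2] u) x‖ ^ 2)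

/-- Divergence of a vector field. -/
noncomputable def divg (u : (Fin 3 → ℝ) → EuclideanSpace ℝ (Fin 3)) :
    (Fin 3 → ℝ) → ℝ :=
  fun x => ∑ i : Fin 3, fderiv ℝ u x (Pi.single i 1) i

/-- Curl of a vector field. -/
noncomputable def curl3 (u : (Fin 3 → ℝ) → EuclideanSpace ℝ (Fin 3)) :
    (Fin 3 → ℝ) → EuclideanSpace ℝ (Fin 3) :=
  fun x => (WithLp.equiv 2 (Fin 3 → ℝ)).symm
    ![fderiv ℝ (fun y => u y 2) x (Pi.single 1 1) - fderiv ℝ (fun y => u y 1) x (Pi.single 2 1),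
      fderiv ℝ (fun y => u y 0) x (Pi.single 2 1) - fderiv ℝ (fun y => u y 2) x (Pi.single 0 1),
      fderiv ℝ (fun y => u y 1) x (Pi.single 0 1) - fderiv ℝ (fun y => u y 0) x (Pi.single 1 1)]

section DivCurl

variable {E F : Type*} [NormedAddCommGroup E] [NormedSpace ℝ E]
  [NormedAddCommGroup F] [NormedSpace ℝ F]

/-- The partial derivative `∂ᵢ f`. -/
noncomputable def partialD (i : Fin 3) (f : (Fin 3 → ℝ) → E) : (Fin 3 → ℝ) → E :=
  fun x => fderiv ℝ f x (Pi.single i 1)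

/-- The sum of the norms of all words of length `n` in `∂₀, ∂₁` applied to `f`, at `x`. -/
noncomputable def tangWordSum : ℕ → ((Fin 3 → ℝ) → E) → (Fin 3 → ℝ) → ℝ
  | 0, f, x => ‖f x‖
  | n + 1, f, x => tangWordSum n (partialD 0 f) x + tangWordSum n (partialD 1 f) x

/-- The first order operator `v ↦ ∑ₖ Mₖ ∂ₖ v` with constant coefficients. -/
noncomputable def firstOrderOp (M : Fin 3 → E →L[ℝ] F) (v : (Fin 3 → ℝ) → E) :
    (Fin 3 → ℝ) → F :=
  fun x => ∑ k, M k (partialD k v x)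

theorem contDiff_partialD {n : ℕ} {f : (Fin 3 → ℝ) → E} (hf : ContDiff ℝ (n + 1 : ℕ) f)
    (i : Fin 3) : ContDiff ℝ n (partialD i f) :=
  (hf.fderiv_right (m := n) (by norm_cast)).clm_apply contDiff_const

theorem contDiff_firstOrderOp {n : ℕ} (M : Fin 3 → E →L[ℝ] F) {v : (Fin 3 → ℝ) → E}
    (hv : ContDiff ℝ (n + 1 : ℕ) v) : ContDiff ℝ n (firstOrderOp M v) :=
  ContDiff.sum fun k _ => (M k).contDiff.comp (contDiff_partialD hv k)

theorem partialD_comm {f : (Fin 3 → ℝ) → E} (hf : ContDiff ℝ 2 f) (i j : Fin 3) :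
    partialD i (partialD j f) = partialD j (partialD i f) := by
  funext x
  have hd : Differentiable ℝ (fderiv ℝ f) :=
    (hf.fderiv_right (m := 1) (by norm_num)).differentiable (by norm_num)
  have key (a b : Fin 3) : partialD a (partialD b f) x =
      fderiv ℝ (fderiv ℝ f) x (Pi.single a 1) (Pi.single b 1) := by
    have h := (hd x).hasFDerivAt.clm_apply
      (hasFDerivAt_const (Pi.single b (1 : ℝ) : Fin 3 → ℝ) x)
    unfold partialD
    rw [h.fderiv]
    simp
  rw [key, key]
  exact (hf.contDiffAt.isSymmSndFDerivAt (by simp)).eq _ _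

theorem partialD_firstOrderOp (M : Fin 3 → E →L[ℝ] F) {v : (Fin 3 → ℝ) → E}
    (hv : ContDiff ℝ 2 v) (i : Fin 3) :
    partialD i (firstOrderOp M v) = firstOrderOp M (partialD i v) := by
  funext x
  have h1 : HasFDerivAt (firstOrderOp M v) (∑ k, (M k).comp (fderiv ℝ (partialD k v) x)) x := by
    refine HasFDerivAt.fun_sum fun k _ => (M k).hasFDerivAt.comp x ?_
    exact ((contDiff_partialD (n := 1) hv k).differentiable (by norm_num) x).hasFDerivAt
  unfold partialD firstOrderOp
  rw [show (fun x => ∑ k, M k (partialD k v x)) = firstOrderOp M v from rfl, h1.fderiv]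
  simp only [sum_apply, ContinuousLinearMap.comp_apply]
  refine Finset.sum_congr rfl fun k _ => ?_
  exact congrArg (M k) (congrFun (partialD_comm hv i k) x)

theorem norm_iteratedFDeriv_partialD_le {n : ℕ} {f : (Fin 3 → ℝ) → E}
    (hf : ContDiff ℝ (n + 1 : ℕ) f) (i : Fin 3) (x : Fin 3 → ℝ) :
    ‖iteratedFDeriv ℝ n (partialD i f) x‖ ≤ ‖iteratedFDeriv ℝ (n + 1) f x‖ := by
  let L : ((Fin 3 → ℝ) →L[ℝ] E) →L[ℝ] E := ContinuousLinearMap.apply ℝ E (Pi.single i 1)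
  have hL : ‖L‖ ≤ 1 := by
    refine L.opNorm_le_bound zero_le_one fun A => ?_
    have h := A.le_opNorm (Pi.single i 1)
    simpa [L, Pi.norm_single] using h
  have hc : ContDiff ℝ n (fderiv ℝ f) := hf.fderiv_right (by norm_cast)
  rw [← norm_iteratedFDeriv_fderiv]
  calc ‖iteratedFDeriv ℝ n (L ∘ fderiv ℝ f) x‖
      ≤ ‖L‖ * ‖iteratedFDeriv ℝ n (fderiv ℝ f) x‖ :=
        L.norm_iteratedFDeriv_comp_left hc.contDiffAt le_rfl
    _ ≤ _ := mul_le_of_le_one_left (norm_nonneg _) hL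

theorem norm_iteratedFDeriv_succ_le_sum {n : ℕ} {f : (Fin 3 → ℝ) → E}
    (hf : ContDiff ℝ (n + 1 : ℕ) f) (x : Fin 3 → ℝ) :
    ‖iteratedFDeriv ℝ (n + 1) f x‖ ≤ ∑ i, ‖iteratedFDeriv ℝ n (partialD i f) x‖ := by
  let L (i : Fin 3) : E →L[ℝ] ((Fin 3 → ℝ) →L[ℝ] E) :=
    ContinuousLinearMap.smulRightL ℝ (Fin 3 → ℝ) E (ContinuousLinearMap.proj i)
  have hL (i : Fin 3) : ‖L i‖ ≤ 1 := by
    refine (L i).opNorm_le_bound zero_le_one fun e => ?_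
    refine ContinuousLinearMap.opNorm_le_bound _ (by positivity) fun y => ?_
    have := norm_le_pi_norm y i
    change ‖y i • e‖ ≤ 1 * ‖e‖ * ‖y‖
    rw [norm_smul, one_mul, mul_comm]
    gcongr
  have hc (i : Fin 3) : ContDiff ℝ n (partialD i f) := contDiff_partialD hf i
  have hdec : fderiv ℝ f = fun y => ∑ i, (L i ∘ partialD i f) y := by
    funext y
    ext m
    have hm : (fderiv ℝ f y) m = ∑ i, m i • fderiv ℝ f y (Pi.single i 1) := by
      conv_lhs => rw [pi_eq_sum_univ' m, map_sum]
      refine Finset.sum_congr rfl fun i _ => ?_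
      rw [map_smul]
    simpa [L, partialD] using hm
  rw [← norm_iteratedFDeriv_fderiv, hdec,
    iteratedFDeriv_fun_sum_apply fun i _ => ((L i).contDiff.comp (hc i)).contDiffAt]
  refine (norm_sum_le _ _).trans (Finset.sum_le_sum fun i _ => ?_)
  exact ((L i).norm_iteratedFDeriv_comp_left (hc i).contDiffAt le_rfl).trans
    (mul_le_of_le_one_left (norm_nonneg _) (hL i))

/-- If `∂₂ v` is a constant coefficient combination of `∂₀ v`, `∂₁ v` and `G v`, then all
derivatives of order `n` are pointwise controlled by the tangential ones and by the derivatives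
of order `< n` of `G v`. -/
theorem exists_norm_iteratedFDeriv_le_tangWordSum (M : Fin 3 → E →L[ℝ] F) (L₀ L₁ : E →L[ℝ] E)
    (R : F →L[ℝ] E) (h : ∀ e : Fin 3 → E, e 2 = L₀ (e 0) + L₁ (e 1) + R (∑ k, M k (e k)))
    (n : ℕ) :
    ∃ K ≥ 0, ∀ v : (Fin 3 → ℝ) → E, ContDiff ℝ n v → ∀ x,
      ‖iteratedFDeriv ℝ n v x‖ ≤ K * (tangWordSum n v x +
        ∑ j ∈ Finset.range n, ‖iteratedFDeriv ℝ j (firstOrderOp M v) x‖) := by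
  induction n with
  | zero => exact ⟨1, zero_le_one, fun v _ x => by simp [tangWordSum]⟩
  | succ n ih =>
    obtain ⟨K, hK, ih⟩ := ih
    refine ⟨2 * (1 + ‖L₀‖ + ‖L₁‖) * K + ‖R‖, by positivity, fun v hv x => ?_⟩
    have hp (i : Fin 3) : ContDiff ℝ n (partialD i v) := contDiff_partialD hv i
    have hG : ContDiff ℝ n (firstOrderOp M v) := contDiff_firstOrderOp M hv
    have hnormal : partialD 2 v =
        (L₀ ∘ partialD 0 v + L₁ ∘ partialD 1 v) + R ∘ firstOrderOp M v :=
      funext fun y => h fun k => partialD k v y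
    have h2 : ‖iteratedFDeriv ℝ n (partialD 2 v) x‖ ≤
        ‖L₀‖ * ‖iteratedFDeriv ℝ n (partialD 0 v) x‖ +
        ‖L₁‖ * ‖iteratedFDeriv ℝ n (partialD 1 v) x‖ +
        ‖R‖ * ‖iteratedFDeriv ℝ n (firstOrderOp M v) x‖ := by
      have c0 : ContDiff ℝ n (L₀ ∘ partialD 0 v) := L₀.contDiff.comp (hp 0)
      have c1 : ContDiff ℝ n (L₁ ∘ partialD 1 v) := L₁.contDiff.comp (hp 1)
      have c01 : ContDiff ℝ n (L₀ ∘ partialD 0 v + L₁ ∘ partialD 1 v) := c0.add c1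
      have c2 : ContDiff ℝ n (R ∘ firstOrderOp M v) := R.contDiff.comp hG
      rw [hnormal, iteratedFDeriv_add_apply c01.contDiffAt c2.contDiffAt,
        iteratedFDeriv_add_apply c0.contDiffAt c1.contDiffAt]
      refine (norm_add₃_le).trans (add_le_add_three ?_ ?_ ?_)
      · exact L₀.norm_iteratedFDeriv_comp_left (hp 0).contDiffAt le_rfl
      · exact L₁.norm_iteratedFDeriv_comp_left (hp 1).contDiffAt le_rfl
      · exact R.norm_iteratedFDeriv_comp_left hG.contDiffAt le_rfl
    have hlow (i : Fin 3) :
        ∑ j ∈ Finset.range n, ‖iteratedFDeriv ℝ j (firstOrderOp M (partialD i v)) x‖ ≤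
        ∑ j ∈ Finset.range (n + 1), ‖iteratedFDeriv ℝ j (firstOrderOp M v) x‖ := by
      rw [Finset.sum_range_succ']
      refine le_add_of_le_of_nonneg (Finset.sum_le_sum fun j hj => ?_) (norm_nonneg _)
      have hjn : j + 1 ≤ n := Finset.mem_range.1 hj
      rw [← partialD_firstOrderOp M (hv.of_le (by norm_cast; omega)) i]
      exact norm_iteratedFDeriv_partialD_le (hG.of_le (by norm_cast)) i x
    have htop : ‖iteratedFDeriv ℝ n (firstOrderOp M v) x‖ ≤
        ∑ j ∈ Finset.range (n + 1), ‖iteratedFDeriv ℝ j (firstOrderOp M v) x‖ :=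
      Finset.single_le_sum (f := fun j => ‖iteratedFDeriv ℝ j (firstOrderOp M v) x‖)
        (fun _ _ => norm_nonneg _) (Finset.self_mem_range_succ n)
    have hsum := norm_iteratedFDeriv_succ_le_sum hv x
    rw [Fin.sum_univ_three] at hsum
    have nonneg (m : ℕ) : ∀ f : (Fin 3 → ℝ) → E, 0 ≤ tangWordSum m f x := by
      induction m with
      | zero => exact fun f => norm_nonneg _
      | succ m hm => exact fun f => add_nonneg (hm _) (hm _)
    have t0 := nonneg n (partialD 0 v)
    have t1 := nonneg n (partialD 1 v)
    set Q := ∑ j ∈ Finset.range (n + 1), ‖iteratedFDeriv ℝ j (firstOrderOp M v) x‖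
    have hQ : 0 ≤ Q := Finset.sum_nonneg fun _ _ => norm_nonneg _
    have b0 : ‖iteratedFDeriv ℝ n (partialD 0 v) x‖ ≤ K * (tangWordSum (n + 1) v x + Q) :=
      (ih _ (hp 0) x).trans (mul_le_mul_of_nonneg_left
        (add_le_add (le_add_of_nonneg_right t1) (hlow 0)) hK)
    have b1 : ‖iteratedFDeriv ℝ n (partialD 1 v) x‖ ≤ K * (tangWordSum (n + 1) v x + Q) :=
      (ih _ (hp 1) x).trans (mul_le_mul_of_nonneg_left
        (add_le_add (le_add_of_nonneg_left t0) (hlow 1)) hK)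
    have bG : ‖iteratedFDeriv ℝ n (firstOrderOp M v) x‖ ≤ tangWordSum (n + 1) v x + Q :=
      htop.trans (le_add_of_nonneg_left (add_nonneg t0 t1))
    set B := tangWordSum (n + 1) v x + Q
    have hB : 0 ≤ K * B := (norm_nonneg _).trans b0
    nlinarith [mul_le_mul_of_nonneg_left b0 (norm_nonneg L₀),
      mul_le_mul_of_nonneg_left b1 (norm_nonneg L₁),
      mul_le_mul_of_nonneg_left bG (norm_nonneg R), mul_nonneg (norm_nonneg L₀) hB,
      mul_nonneg (norm_nonneg L₁) hB]

theorem contDiff_iterate_partialD {n : ℕ} (i : Fin 3) (a : ℕ) {f : (Fin 3 → ℝ) → E}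
    (hf : ContDiff ℝ (n + a : ℕ) f) : ContDiff ℝ n ((partialD i)^[a] f) := by
  induction a generalizing f with
  | zero => exact hf
  | succ a ih => exact ih (contDiff_partialD hf i)

theorem norm_iteratedFDeriv_prodMk_le {n : ℕ} {f : (Fin 3 → ℝ) → E} {g : (Fin 3 → ℝ) → F}
    (hf : ContDiff ℝ n f) (hg : ContDiff ℝ n g) (x : Fin 3 → ℝ) :
    ‖iteratedFDeriv ℝ n (fun y => (f y, g y)) x‖ ≤
      ‖iteratedFDeriv ℝ n f x‖ + ‖iteratedFDeriv ℝ n g x‖ := by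
  have hdec : (fun y => (f y, g y)) =
      ContinuousLinearMap.inl ℝ E F ∘ f + ContinuousLinearMap.inr ℝ E F ∘ g := by
    funext y
    simp
  have cf : ContDiff ℝ n (ContinuousLinearMap.inl ℝ E F ∘ f) :=
    (ContinuousLinearMap.inl ℝ E F).contDiff.comp hf
  have cg : ContDiff ℝ n (ContinuousLinearMap.inr ℝ E F ∘ g) :=
    (ContinuousLinearMap.inr ℝ E F).contDiff.comp hg
  rw [hdec, iteratedFDeriv_add_apply cf.contDiffAt cg.contDiffAt]
  refine (norm_add_le _ _).trans (add_le_add ?_ ?_)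
  · exact ((ContinuousLinearMap.inl ℝ E F).norm_iteratedFDeriv_comp_left hf.contDiffAt
      le_rfl).trans (mul_le_of_le_one_left (norm_nonneg _)
        (ContinuousLinearMap.norm_inl_le_one ℝ E F))
  · exact ((ContinuousLinearMap.inr ℝ E F).norm_iteratedFDeriv_comp_left hg.contDiffAt
      le_rfl).trans (mul_le_of_le_one_left (norm_nonneg _)
        (ContinuousLinearMap.norm_inr_le_one ℝ E F))

end DivCurl

/-- The vector product `e ↦ eₖ × e`, so that `curl u = ∑ₖ eₖ × ∂ₖ u`. -/
noncomputable def basisCross (k : Fin 3) :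
    EuclideanSpace ℝ (Fin 3) →L[ℝ] EuclideanSpace ℝ (Fin 3) :=
  LinearMap.toContinuousLinearMap
    ((WithLp.linearEquiv 2 ℝ (Fin 3 → ℝ)).symm.toLinearMap ∘ₗ
      crossProduct (Pi.single k (1 : ℝ)) ∘ₗ (WithLp.linearEquiv 2 ℝ (Fin 3 → ℝ)).toLinearMap)

/-- The coefficients of the first order operator `u ↦ (div u, curl u)`. -/
noncomputable def divCurlCoeff (k : Fin 3) :
    EuclideanSpace ℝ (Fin 3) →L[ℝ] ℝ × EuclideanSpace ℝ (Fin 3) :=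
  (EuclideanSpace.proj k).prod (basisCross k)

theorem basisCross_apply (k : Fin 3) (e : EuclideanSpace ℝ (Fin 3)) :
    basisCross k e = WithLp.toLp 2 (crossProduct (Pi.single k (1 : ℝ)) e.ofLp) := rfl

theorem firstOrderOp_divCurlCoeff {u : (Fin 3 → ℝ) → EuclideanSpace ℝ (Fin 3)}
    (hu : Differentiable ℝ u) :
    firstOrderOp divCurlCoeff u = fun x => (divg u x, curl3 u x) := by
  funext x
  have hcomp (i : Fin 3) (y : Fin 3 → ℝ) :
      fderiv ℝ (fun y => u y i) x y = (fderiv ℝ u x y) i := by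
    have h : HasFDerivAt (fun y => u y i) ((EuclideanSpace.proj i).comp (fderiv ℝ u x)) x :=
      (EuclideanSpace.proj (𝕜 := ℝ) i).hasFDerivAt.comp x (hu x).hasFDerivAt
    rw [h.fderiv]
    rfl
  refine Prod.ext ?_ ?_
  · simp [firstOrderOp, divCurlCoeff, divg, partialD, Fin.sum_univ_three]
  · ext i
    simp only [firstOrderOp, divCurlCoeff, curl3, hcomp]
    fin_cases i <;>
      simp [Fin.sum_univ_three, basisCross_apply, cross_apply, partialD, Pi.single_apply] <;> ring

theorem normal_eq_tangential_add_divCurl (e : Fin 3 → EuclideanSpace ℝ (Fin 3)) :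
    e 2 = basisCross 1 (e 0) + (-basisCross 0) (e 1) +
      ((ContinuousLinearMap.fst ℝ ℝ (EuclideanSpace ℝ (Fin 3))).smulRight
          (EuclideanSpace.single 2 (1 : ℝ) : EuclideanSpace ℝ (Fin 3)) -
        (basisCross 2).comp (ContinuousLinearMap.snd ℝ ℝ (EuclideanSpace ℝ (Fin 3))))
        (∑ k, divCurlCoeff k (e k)) := by
  ext i
  fin_cases i <;>
    simp [divCurlCoeff, Fin.sum_univ_three, basisCross_apply, cross_apply]
  ring

/-- The tangential derivatives entering `tangSum`, at a point. -/
theorem tangWordSum_le {u : (Fin 3 → ℝ) → EuclideanSpace ℝ (Fin 3)} (hu : ContDiff ℝ 3 u)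
    {j : ℕ} (hj : j ≤ 3) (x : Fin 3 → ℝ) :
    tangWordSum j u x ≤
      3 * ∑ p ∈ (Finset.range 4 ×ˢ Finset.range 4).filter (fun p => p.1 + p.2 ≤ 3),
        ‖(Dtan 0)^[p.1] ((Dtan 1)^[p.2] u) x‖ := by
  have hD (i : Fin 3) (v : (Fin 3 → ℝ) → EuclideanSpace ℝ (Fin 3)) : Dtan i v = partialD i v :=
    rfl
  have c1 (i : Fin 3) : ContDiff ℝ 2 (partialD i u) := contDiff_partialD (n := 2) hu i
  have e10 : partialD 1 (partialD 0 u) = partialD 0 (partialD 1 u) :=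
    partialD_comm (hu.of_le (by norm_num)) 1 0
  have e10' (i : Fin 3) : partialD 1 (partialD 0 (partialD i u)) =
      partialD 0 (partialD 1 (partialD i u)) := partialD_comm (c1 i) 1 0
  rw [Finset.sum_filter, Finset.sum_product]
  interval_cases j <;>
    simp [Finset.sum_range_succ, tangWordSum, hD, e10, e10'] <;>
    linarith [norm_nonneg (u x), norm_nonneg (partialD 0 u x), norm_nonneg (partialD 1 u x),
      norm_nonneg (partialD 0 (partialD 0 u) x), norm_nonneg (partialD 0 (partialD 1 u) x),
      norm_nonneg (partialD 1 (partialD 1 u) x),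
      norm_nonneg (partialD 0 (partialD 0 (partialD 0 u)) x),
      norm_nonneg (partialD 0 (partialD 0 (partialD 1 u)) x),
      norm_nonneg (partialD 0 (partialD 1 (partialD 1 u)) x),
      norm_nonneg (partialD 1 (partialD 1 (partialD 1 u)) x)]

theorem integrableOn_cell {f : (Fin 3 → ℝ) → ℝ} (hf : Continuous f) :
    IntegrableOn f cell := by
  refine (hf.integrableOn_Icc (a := 0) (b := 1)).mono_set fun x hx => ?_
  obtain ⟨h0, h1, h2⟩ := hx
  refine ⟨fun i => ?_, fun i => ?_⟩ <;> fin_cases i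
  exacts [h0.1.le, h1.1.le, h2.1.le, h0.2.le, h1.2.le, h2.2.le]

theorem integrableOn_norm_iteratedFDeriv_sq {F : Type*} [NormedAddCommGroup F]
    [NormedSpace ℝ F] {m j : ℕ} (hj : j ∈ Finset.range (m + 1)) {u : (Fin 3 → ℝ) → F}
    (hu : ContDiff ℝ m u) :
    IntegrableOn (fun x => ‖iteratedFDeriv ℝ j u x‖ ^ 2) cell :=
  integrableOn_cell ((hu.continuous_iteratedFDeriv
    (by exact_mod_cast Finset.mem_range_succ_iff.1 hj)).norm.pow 2)

theorem integrableOn_Dtan_sq {u : (Fin 3 → ℝ) → EuclideanSpace ℝ (Fin 3)}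
    (hu : ContDiff ℝ 3 u) {a b : ℕ} (hab : a + b ≤ 3) :
    IntegrableOn (fun x => ‖(Dtan 0)^[a] ((Dtan 1)^[b] u) x‖ ^ 2) cell := by
  have h : ContDiff ℝ (0 : ℕ) ((partialD 0)^[a] ((partialD 1)^[b] u)) :=
    contDiff_iterate_partialD 0 a (contDiff_iterate_partialD 1 b
      (hu.of_le (by norm_cast; omega)))
  exact integrableOn_cell (h.continuous.norm.pow 2)

/-- The pointwise form of the div-curl estimate. -/
theorem exists_sum_norm_iteratedFDeriv_sq_le :
    ∃ C ≥ 0, ∀ u : (Fin 3 → ℝ) → EuclideanSpace ℝ (Fin 3), ContDiff ℝ 3 u → ∀ x,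
      ∑ j ∈ Finset.range (3 + 1), ‖iteratedFDeriv ℝ j u x‖ ^ 2 ≤
        C * (∑ p ∈ (Finset.range 4 ×ˢ Finset.range 4).filter (fun p => p.1 + p.2 ≤ 3),
            ‖(Dtan 0)^[p.1] ((Dtan 1)^[p.2] u) x‖ ^ 2 +
          ∑ j ∈ Finset.range (2 + 1), ‖iteratedFDeriv ℝ j (divg u) x‖ ^ 2 +
          ∑ j ∈ Finset.range (2 + 1), ‖iteratedFDeriv ℝ j (curl3 u) x‖ ^ 2) := by
  choose K hK hKu using exists_norm_iteratedFDeriv_le_tangWordSum divCurlCoeff _ _ _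
    normal_eq_tangential_add_divCurl
  refine ⟨(∑ j ∈ Finset.range (3 + 1), (3 * K j) ^ 2) * 30, by positivity, fun u hu x => ?_⟩
  have hop := firstOrderOp_divCurlCoeff (hu.differentiable (by norm_num))
  have hpair : ContDiff ℝ 2 fun x => (divg u x, curl3 u x) :=
    hop ▸ contDiff_firstOrderOp (n := 2) divCurlCoeff hu
  have hdiv : ContDiff ℝ 2 (divg u) := hpair.fst
  have hcurl : ContDiff ℝ 2 (curl3 u) := hpair.snd
  set P := (Finset.range 4 ×ˢ Finset.range 4).filter (fun p => p.1 + p.2 ≤ 3) with hP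
  have hPcard : P.card = 10 := by rw [hP]; decide
  set T := ∑ p ∈ P, ‖(Dtan 0)^[p.1] ((Dtan 1)^[p.2] u) x‖ with hT
  set D := ∑ j ∈ Finset.range (2 + 1), ‖iteratedFDeriv ℝ j (divg u) x‖ with hD
  set W := ∑ j ∈ Finset.range (2 + 1), ‖iteratedFDeriv ℝ j (curl3 u) x‖ with hW
  have T0 : 0 ≤ T := by positivity
  have D0 : 0 ≤ D := by positivity
  have W0 : 0 ≤ W := by positivity
  have hord {j : ℕ} (hj : j ∈ Finset.range (3 + 1)) :
      ‖iteratedFDeriv ℝ j u x‖ ≤ 3 * K j * (T + D + W) := by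
    have hj3 : j ≤ 3 := Finset.mem_range_succ_iff.1 hj
    have hlow : ∑ i ∈ Finset.range j, ‖iteratedFDeriv ℝ i (firstOrderOp divCurlCoeff u) x‖ ≤
        D + W := by
      rw [hop, hD, hW, ← Finset.sum_add_distrib]
      calc _ ≤ ∑ i ∈ Finset.range (2 + 1),
            ‖iteratedFDeriv ℝ i (fun x => (divg u x, curl3 u x)) x‖ :=
            Finset.sum_le_sum_of_subset_of_nonneg (Finset.range_mono hj3)
              fun _ _ _ => norm_nonneg _
        _ ≤ _ := Finset.sum_le_sum fun i hi => by
          have hi2 : (i : WithTop ℕ∞) ≤ 2 := by exact_mod_cast Finset.mem_range_succ_iff.1 hi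
          exact norm_iteratedFDeriv_prodMk_le (hdiv.of_le hi2) (hcurl.of_le hi2) x
    have h := hKu j u (hu.of_le (by exact_mod_cast hj3)) x
    have ht := tangWordSum_le hu hj3 x
    calc _ ≤ K j * (3 * (T + D + W)) :=
          h.trans (mul_le_mul_of_nonneg_left (by linarith) (hK j))
      _ = _ := by ring
  have hT2 := sq_sum_le_card_mul_sum_sq (s := P)
    (f := fun p => ‖(Dtan 0)^[p.1] ((Dtan 1)^[p.2] u) x‖)
  have hD2 := sq_sum_le_card_mul_sum_sq (s := Finset.range (2 + 1))
    (f := fun j => ‖iteratedFDeriv ℝ j (divg u) x‖)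
  have hW2 := sq_sum_le_card_mul_sum_sq (s := Finset.range (2 + 1))
    (f := fun j => ‖iteratedFDeriv ℝ j (curl3 u) x‖)
  rw [hPcard, ← hT] at hT2
  rw [Finset.card_range, ← hD] at hD2
  rw [Finset.card_range, ← hW] at hW2
  push_cast at hT2 hD2 hW2
  have hD3 : 0 ≤ ∑ j ∈ Finset.range (2 + 1), ‖iteratedFDeriv ℝ j (divg u) x‖ ^ 2 := by
    positivity
  have hW3 : 0 ≤ ∑ j ∈ Finset.range (2 + 1), ‖iteratedFDeriv ℝ j (curl3 u) x‖ ^ 2 := by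
    positivity
  rw [mul_assoc, Finset.sum_mul]
  refine Finset.sum_le_sum fun j hj => ?_
  calc ‖iteratedFDeriv ℝ j u x‖ ^ 2 ≤ (3 * K j * (T + D + W)) ^ 2 := by
        gcongr
        exact hord hj
    _ = (3 * K j) ^ 2 * (T + D + W) ^ 2 := by ring
    _ ≤ _ := by
        gcongr
        nlinarith [sq_nonneg (T - D), sq_nonneg (T - W), sq_nonneg (D - W)]

/-- Div-curl estimate on `Ω⁺ = 𝕋² × (0,1)`: the `H³` norm of `u` is controlled, with a
constant independent of `u`, by the `L²` norms of its tangential derivatives of order `≤ 3`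
together with the `H²` norms of its divergence and of its curl. -/
theorem div_curl_H3_estimate :
    ∃ C > 0, ∀ u : (Fin 3 → ℝ) → EuclideanSpace ℝ (Fin 3),
      ContDiff ℝ 3 u →
      (∀ x : Fin 3 → ℝ, u (x + Pi.single 0 1) = u x ∧ u (x + Pi.single 1 1) = u x) →
      Real.sqrt (HmSq 3 u) ≤
        C * (tangSum u + Real.sqrt (HmSq 2 (divg u)) + Real.sqrt (HmSq 2 (curl3 u))) := by
  obtain ⟨C, hC, hCu⟩ := exists_sum_norm_iteratedFDeriv_sq_le
  refine ⟨Real.sqrt (C + 1), by positivity, fun u hu _ => ?_⟩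
  have hpair : ContDiff ℝ 2 fun x => (divg u x, curl3 u x) :=
    firstOrderOp_divCurlCoeff (hu.differentiable (by norm_num)) ▸
      contDiff_firstOrderOp (n := 2) divCurlCoeff hu
  have iu := fun j hj => integrableOn_norm_iteratedFDeriv_sq (m := 3) (j := j) hj hu
  have hdiv : ContDiff ℝ 2 (divg u) := hpair.fst
  have hcurl : ContDiff ℝ 2 (curl3 u) := hpair.snd
  have idiv := fun j hj => integrableOn_norm_iteratedFDeriv_sq (m := 2) (j := j) hj hdiv
  have icurl := fun j hj => integrableOn_norm_iteratedFDeriv_sq (m := 2) (j := j) hj hcurl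
  set P := (Finset.range 4 ×ˢ Finset.range 4).filter (fun p => p.1 + p.2 ≤ 3) with hP
  have it : ∀ p ∈ P, IntegrableOn (fun x => ‖(Dtan 0)^[p.1] ((Dtan 1)^[p.2] u) x‖ ^ 2) cell :=
    fun p hp => integrableOn_Dtan_sq hu (Finset.mem_filter.1 hp).2
  have hint : HmSq 3 u ≤
      C * ((∑ p ∈ P, ∫ x in cell, ‖(Dtan 0)^[p.1] ((Dtan 1)^[p.2] u) x‖ ^ 2) + HmSq 2 (divg u) +
        HmSq 2 (curl3 u)) := by
    have jt := integrable_finsetSum P it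
    have jd := integrable_finsetSum _ idiv
    have jc := integrable_finsetSum _ icurl
    unfold HmSq
    rw [← integral_finsetSum _ iu, ← integral_finsetSum _ idiv, ← integral_finsetSum _ icurl,
      ← integral_finsetSum _ it, ← integral_add jt jd, ← integral_add (by exact jt.add jd) jc,
      ← integral_const_mul]
    exact integral_mono (integrable_finsetSum _ iu) (((jt.add jd).add jc).const_mul C)
      fun x => hCu u hu x
  have hH {F : Type} [NormedAddCommGroup F] [NormedSpace ℝ F] (v : (Fin 3 → ℝ) → F) :
      0 ≤ HmSq 2 v :=
    Finset.sum_nonneg fun _ _ => integral_nonneg fun _ => sq_nonneg _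
  have htan : ∑ p ∈ P, ∫ x in cell, ‖(Dtan 0)^[p.1] ((Dtan 1)^[p.2] u) x‖ ^ 2 ≤
      tangSum u ^ 2 := by
    refine le_trans (Finset.sum_le_sum fun p _ => ?_)
      (Finset.sum_sq_le_sq_sum_of_nonneg fun p _ => Real.sqrt_nonneg _)
    rw [Real.sq_sqrt (integral_nonneg fun _ => sq_nonneg _)]
  have t0 : 0 ≤ tangSum u := Finset.sum_nonneg fun _ _ => Real.sqrt_nonneg _
  have d0 := Real.sqrt_nonneg (HmSq 2 (divg u))
  have c0 := Real.sqrt_nonneg (HmSq 2 (curl3 u))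
  have hd := Real.sq_sqrt (hH (divg u))
  have hc := Real.sq_sqrt (hH (curl3 u))
  refine Real.sqrt_le_iff.2 ⟨by positivity, ?_⟩
  rw [mul_pow, Real.sq_sqrt (by positivity)]
  refine hint.trans (mul_le_mul (by linarith) ?_ ?_ (by positivity))
  · nlinarith [mul_nonneg t0 d0, mul_nonneg t0 c0, mul_nonneg d0 c0]
  · exact add_nonneg (add_nonneg (Finset.sum_nonneg fun _ _ =>
      integral_nonneg fun _ => sq_nonneg _) (hH _)) (hH _)
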